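/- arXiv:1810.05492 — 2 statements merged into one kernel-verified Lean document; each statement's English description precedes it below -/
import Mathlib

section
/- Let T > 0, M ∈ ℝ with M ≠ 0, m₀ ∈ ℝ, and let m(t) = (m₀ − sgn(M)) · ((|M|(T−t)+1)/(|M|T+1))² + sgn(M). Then m(T) = M if and only if T²M³ + T(2−T)M|M| + (1−2T)M − m₀ = 0. -/
/-! At `t = T` the squared ratio is `1 / (|M|T + 1)²`, so clearing the denominator turns `m(T) = M`
into `m₀ - sgn M = (M - sgn M)(|M|T + 1)²`. Expanding the square and eliminating the sign through
`sgn M · |M| = M` gives the consistency equation. -/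

theorem real_sign_mul_abs (x : ℝ) : Real.sign x * |x| = x := by
  rcases lt_trichotomy x 0 with hneg | rfl | hpos
  · rw [Real.sign_of_neg hneg, abs_of_neg hneg, neg_one_mul, neg_neg]
  · rw [abs_zero, mul_zero]
  · rw [Real.sign_of_pos hpos, abs_of_pos hpos, one_mul]

theorem consistency_polynomial_eq (T M m₀ : ℝ) :
    T ^ 2 * M ^ 3 + T * (2 - T) * M * |M| + (1 - 2 * T) * M - m₀ =
      (M - Real.sign M) * (|M| * T + 1) ^ 2 - (m₀ - Real.sign M) := by
  linear_combination (T ^ 2 * |M| + 2 * T) * real_sign_mul_abs M - T ^ 2 * M * sq_abs M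

theorem mul_one_div_sq_add_eq_iff {K : Type*} [DivisionRing K] {a b c d : K} (hd : d ≠ 0) :
    a * (1 / d) ^ 2 + c = b ↔ a = (b - c) * d ^ 2 := by
  rw [← eq_sub_iff_add_eq, one_div_pow, mul_one_div, div_eq_iff (pow_ne_zero 2 hd)]

/-- Let `T > 0`, `M ≠ 0`, `m₀ ∈ ℝ`, and
`m(t) = (m₀ − sgn M)·((|M|(T−t)+1)/(|M|T+1))² + sgn M`. Then `m(T) = M` iff
`T²M³ + T(2−T)M|M| + (1−2T)M − m₀ = 0`. -/
theorem stmt_7 (T M m₀ : ℝ) (hT : 0 < T) (hM : M ≠ 0) :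
    let m : ℝ → ℝ := fun t =>
      (m₀ - Real.sign M) * ((|M| * (T - t) + 1) / (|M| * T + 1))^2 + Real.sign M
    (m T = M ↔ T^2 * M^3 + T*(2 - T) * M * |M| + (1 - 2*T) * M - m₀ = 0) := by
  intro m
  have hden : |M| * T + 1 ≠ 0 := by positivity
  have hterminal : m T = (m₀ - Real.sign M) * (1 / (|M| * T + 1)) ^ 2 + Real.sign M := by
    simp only [m, sub_self, mul_zero, zero_add]
  rw [hterminal, mul_one_div_sq_add_eq_iff hden, consistency_polynomial_eq, sub_eq_zero, eq_comm]
end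

section
/- Fix N ≥ 1 and T > 0, and let S_N = {0, 1/N, 2/N, …, 1}. Then there exists a unique function V : [0,T] × S_N → ℝ, differentiable in t, satisfying for every μ ∈ S_N and t ∈ [0,T]: −(d/dt)V(t,μ) + ((V(t,1−μ) − V(t,μ))⁻)²/2 = Nμ · (V(t,1−μ) − V(t,μ))⁻ · (V(t,μ−1/N) − V(t,μ)) + N(1−μ) · (V(t,μ+1/N) − V(t,1−μ−1/N))⁻ · (V(t,μ+1/N) − V(t,μ)), with terminal condition V(T,μ) = −(2μ−1) (terms carrying the coefficient Nμ are omitted when μ = 0 and terms carrying N(1−μ) when μ = 1); moreover this solution satisfies |V(t,μ)| ≤ 1 for all t and μ. -/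
/-- The grid `S_N = {0, 1/N, 2/N, …, 1}` of possible empirical fractions. -/
def gridSN (N : ℕ) : Set ℝ := {μ : ℝ | ∃ k : ℕ, k ≤ N ∧ μ = (k : ℝ) / N}

/-- `V` solves, on `[0,T] × S_N`, the closed Hamilton–Jacobi–Bellman ODE system
`−(d/dt)V(t,μ) + ((V(t,1−μ) − V(t,μ))⁻)²/2
  = Nμ·(V(t,1−μ) − V(t,μ))⁻·(V(t,μ−1/N) − V(t,μ))
    + N(1−μ)·(V(t,μ+1/N) − V(t,1−μ−1/N))⁻·(V(t,μ+1/N) − V(t,μ))`,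
with the `Nμ`-terms omitted at `μ = 0` and the `N(1−μ)`-terms omitted at `μ = 1`;
here `p⁻ = max (−p) 0` is the negative part. -/
def HJBSol (N : ℕ) (T : ℝ) (V : ℝ → ℝ → ℝ) : Prop :=
  ∀ μ ∈ gridSN N, ∀ t ∈ Set.Icc (0:ℝ) T,
    HasDerivWithinAt (fun s : ℝ => V s μ)
      ((max (-(V t (1 - μ) - V t μ)) 0)^2 / 2
        - (if μ = 0 then 0 else
            (N : ℝ) * μ * (max (-(V t (1 - μ) - V t μ)) 0)
              * (V t (μ - 1/(N : ℝ)) - V t μ))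
        - (if μ = 1 then 0 else
            (N : ℝ) * (1 - μ)
              * (max (-(V t (μ + 1/(N : ℝ)) - V t (1 - μ - 1/(N : ℝ)))) 0)
              * (V t (μ + 1/(N : ℝ)) - V t μ)))
      (Set.Icc (0:ℝ) T) t

/-!
In the finitely many values of `V` on the grid, the system is an autonomous ODE with a locally
Lipschitz field, so solutions are unique. It also satisfies a maximum principle: where `v` attains
its maximum over the grid, both jump terms of the time derivative are nonnegative, and where `v`
attains its minimum, the control `(v (1 - μ) - v μ)⁻` vanishes and the time derivative is
nonpositive. Hence a box `[a, b]` containing the terminal values is invariant backwards in time: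
replacing the field by its composition with the retraction onto the box makes it bounded and
Lipschitz, and the resulting global solution never leaves the box, where the two fields agree.
-/

open Set Function
open scoped NNReal

section LocallyLipschitz

variable {α ι : Type*} [PseudoEMetricSpace α]

theorem locallyLipschitz_mul {f g : α → ℝ} (hf : LocallyLipschitz f) (hg : LocallyLipschitz g) :
    LocallyLipschitz fun x => f x * g x :=
  (contDiff_mul (𝕜 := ℝ) (n := 1)).locallyLipschitz.comp (hf.prodMk hg)

theorem locallyLipschitz_negPart {f : α → ℝ} (hf : LocallyLipschitz f) :
    LocallyLipschitz fun x => (f x)⁻ :=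
  hf.neg.max_const 0

theorem locallyLipschitz_pi [Fintype ι] {β : ι → Type*} [∀ i, PseudoEMetricSpace (β i)]
    {f : α → ∀ i, β i} (hf : ∀ i, LocallyLipschitz fun x => f x i) : LocallyLipschitz f := by
  intro x
  choose K t ht hK using fun i => hf i x
  refine ⟨∑ i, K i, ⋂ i, t i, Filter.iInter_mem.2 ht,
    fun y hy z hz => edist_pi_le_iff.2 fun i => ?_⟩
  calc edist (f y i) (f z i) ≤ K i * edist y z := hK i (mem_iInter.1 hy i) (mem_iInter.1 hz i)
    _ ≤ (∑ i, K i : ℝ≥0) * edist y z := by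
      gcongr
      exact Finset.single_le_sum (fun _ _ => zero_le) (Finset.mem_univ i)

theorem lipschitzWith_extend_apply [Fintype ι] {γ : Type*} (f : ι → γ) (g : γ → ℝ) (y : γ) :
    LipschitzWith 1 fun x : ι → ℝ => extend f x g y := by
  classical
  by_cases hy : ∃ i, f i = y
  · have h_eval (x : ι → ℝ) : extend f x g y = x hy.choose := by rw [extend_def, dif_pos hy]
    simpa only [h_eval] using LipschitzWith.eval (α := fun _ => ℝ) hy.choose
  · simpa only [extend_apply' _ _ _ hy] using LipschitzWith.const' (g y)

end LocallyLipschitz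

section Clamp

variable {ι : Type*} {l r : ι → ℝ}

/-- The coordinatewise retraction of `ι → ℝ` onto the box `Icc l r` (for `l ≤ r`). -/
def clamp (l r x : ι → ℝ) : ι → ℝ := l ⊔ r ⊓ x

theorem clamp_mem_Icc (h : l ≤ r) (x : ι → ℝ) : clamp l r x ∈ Icc l r :=
  ⟨le_sup_left, sup_le h inf_le_left⟩

theorem clamp_of_mem_Icc {x : ι → ℝ} (hx : x ∈ Icc l r) : clamp l r x = x := by
  rw [clamp, inf_eq_right.2 hx.2, sup_eq_right.2 hx.1]

theorem clamp_apply_of_le_left {x : ι → ℝ} {i : ι} (hx : x i ≤ l i) : clamp l r x i = l i :=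
  max_eq_left ((min_le_right _ _).trans hx)

theorem clamp_apply_of_right_le (h : l ≤ r) {x : ι → ℝ} {i : ι} (hx : r i ≤ x i) :
    clamp l r x i = r i := by
  change max (l i) (min (r i) (x i)) = r i
  rw [min_eq_left hx, max_eq_right (h i)]

theorem lipschitzWith_clamp [Fintype ι] (l r : ι → ℝ) : LipschitzWith 1 (clamp l r) :=
  fun x y => edist_pi_le_iff.2 fun i =>
    (((LipschitzWith.eval i).const_min (r i)).const_max (l i)) x y

end Clamp

section TerminalValueProblem

variable {a b : ℝ}

theorem le_of_terminal_le_of_deriv_nonneg {u u' : ℝ → ℝ} {c : ℝ}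
    (hu : ∀ t ∈ Icc a b, HasDerivWithinAt u (u' t) (Icc a b) t) (hub : u b ≤ c)
    (hu' : ∀ t ∈ Icc a b, c < u t → 0 ≤ u' t) : ∀ t ∈ Icc a b, u t ≤ c := by
  intro t ht
  have hsub : Icc t b ⊆ Icc a b := Icc_subset_Icc_left ht.1
  have hcont : ContinuousOn u (Icc a b) := fun s hs => (hu s hs).continuousWithinAt
  obtain ⟨s, ⟨hs, hsc⟩, hfirst⟩ : ∃ s, IsLeast (Icc t b ∩ u ⁻¹' Iic c) s :=
    (isCompact_Icc.of_isClosed_subset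
      ((hcont.mono hsub).preimage_isClosed_of_isClosed isClosed_Icc isClosed_Iic)
      inter_subset_left).exists_isLeast ⟨b, right_mem_Icc.2 ht.2, hub⟩
  have hts : Icc t s ⊆ Icc a b := (Icc_subset_Icc_right hs.2).trans hsub
  have hmono : MonotoneOn u (Icc t s) := by
    refine monotoneOn_of_hasDerivWithinAt_nonneg (f' := u') (convex_Icc t s) (hcont.mono hts)
      (fun x hx => (hu x (hts (interior_subset hx))).mono (interior_subset.trans hts))
      fun x hx => hu' x (hts (interior_subset hx)) ?_
    rw [interior_Icc] at hx
    by_contra! hxc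
    exact hx.2.not_ge (hfirst ⟨⟨hx.1.le, hx.2.le.trans hs.2⟩, hxc⟩)
  exact (hmono (left_mem_Icc.2 hs.1) (right_mem_Icc.2 hs.1) hs.1).trans hsc

theorem exists_isIntegralCurveOn_of_bounded {E : Type*} [NormedAddCommGroup E] [NormedSpace ℝ E]
    [CompleteSpace E] {F : E → E} {K L : ℝ≥0} (hF : LipschitzWith K F) (hL : ∀ x, ‖F x‖ ≤ L)
    {t₀ : ℝ} (ht₀ : t₀ ∈ Icc a b) (x₀ : E) :
    ∃ X : ℝ → E, X t₀ = x₀ ∧ IsIntegralCurveOn X (fun _ => F) (Icc a b) :=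
  (IsPicardLindelof.of_time_independent (t₀ := ⟨t₀, ht₀⟩) (r := 0)
    (a := L * (max (b - t₀) (t₀ - a)).toNNReal) (fun x _ => hL x) hF.lipschitzOnWith (by
      rw [NNReal.coe_mul, NNReal.coe_zero, sub_zero]
      gcongr
      exact Real.le_coe_toNNReal _)).exists_eq_forall_mem_Icc_hasDerivWithinAt₀

theorem eqOn_of_isIntegralCurveOn_of_terminal_eq {E : Type*} [NormedAddCommGroup E]
    [NormedSpace ℝ E] {F : E → E} (hF : LocallyLipschitz F) {X Y : ℝ → E}
    (hX : IsIntegralCurveOn X (fun _ => F) (Icc a b))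
    (hY : IsIntegralCurveOn Y (fun _ => F) (Icc a b)) (hXY : X b = Y b) : EqOn X Y (Icc a b) := by
  obtain ⟨K, hK⟩ := (hF.locallyLipschitzOn (s := X '' Icc a b ∪ Y '' Icc a b))
    |>.exists_lipschitzOnWith_of_compact
      ((isCompact_Icc.image_of_continuousOn hX.continuousOn).union
        (isCompact_Icc.image_of_continuousOn hY.continuousOn))
  have left_deriv {Z : ℝ → E} (hZ : IsIntegralCurveOn Z (fun _ => F) (Icc a b)) :
      ∀ t ∈ Ioc a b, HasDerivWithinAt Z (F (Z t)) (Iic t) t := fun t ht =>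
    (hZ t (Ioc_subset_Icc_self ht)).mono_of_mem_nhdsWithin (Icc_mem_nhdsLE_of_mem ht)
  exact ODE_solution_unique_of_mem_Icc_left (v := fun _ => F) (fun _ _ => hK)
    hX.continuousOn (left_deriv hX)
    (fun t ht => .inl (mem_image_of_mem X (Ioc_subset_Icc_self ht)))
    hY.continuousOn (left_deriv hY)
    (fun t ht => .inr (mem_image_of_mem Y (Ioc_subset_Icc_self ht))) hXY

variable {ι : Type*} [Fintype ι] {F : (ι → ℝ) → ι → ℝ} {l r : ι → ℝ}

theorem mem_Icc_of_isIntegralCurveOn_comp_clamp (hlr : l ≤ r)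
    (hFr : ∀ x ∈ Icc l r, ∀ i, x i = r i → 0 ≤ F x i)
    (hFl : ∀ x ∈ Icc l r, ∀ i, x i = l i → F x i ≤ 0)
    {X : ℝ → ι → ℝ} (hX : IsIntegralCurveOn X (fun _ => F ∘ clamp l r) (Icc a b))
    (hXb : X b ∈ Icc l r) : ∀ t ∈ Icc a b, X t ∈ Icc l r := by
  have hX_apply (i : ι) (t : ℝ) (ht : t ∈ Icc a b) :
      HasDerivWithinAt (X · i) (F (clamp l r (X t)) i) (Icc a b) t :=
    hasDerivWithinAt_pi.1 (hX t ht) i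
  refine fun t ht => ⟨fun i => ?_, fun i => ?_⟩
  · refine neg_le_neg_iff.1 (le_of_terminal_le_of_deriv_nonneg
      (fun s hs => (hX_apply i s hs).neg) (neg_le_neg (hXb.1 i)) (fun s _ hs => ?_) t ht)
    exact neg_nonneg.2 (hFl _ (clamp_mem_Icc hlr _) i
      (clamp_apply_of_le_left (neg_lt_neg_iff.1 hs).le))
  · exact le_of_terminal_le_of_deriv_nonneg (hX_apply i) (hXb.2 i) (fun s _ hs =>
      hFr _ (clamp_mem_Icc hlr _) i (clamp_apply_of_right_le hlr hs.le)) t ht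

theorem exists_isIntegralCurveOn_mem_Icc (hab : a ≤ b) (hF : LocallyLipschitzOn (Icc l r) F)
    (hFr : ∀ x ∈ Icc l r, ∀ i, x i = r i → 0 ≤ F x i)
    (hFl : ∀ x ∈ Icc l r, ∀ i, x i = l i → F x i ≤ 0) {x₀ : ι → ℝ} (hx₀ : x₀ ∈ Icc l r) :
    ∃ X : ℝ → ι → ℝ, X b = x₀ ∧ IsIntegralCurveOn X (fun _ => F) (Icc a b) ∧
      ∀ t ∈ Icc a b, X t ∈ Icc l r := by
  have hlr : l ≤ r := hx₀.1.trans hx₀.2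
  obtain ⟨K, hK⟩ := hF.exists_lipschitzOnWith_of_compact isCompact_Icc
  obtain ⟨L, hL⟩ := isCompact_Icc.exists_bound_of_continuousOn hF.continuousOn
  have hclamp_lip : LipschitzWith (K * 1) (F ∘ clamp l r) := lipschitzOnWith_univ.1 <|
    hK.comp (lipschitzWith_clamp l r).lipschitzOnWith fun x _ => clamp_mem_Icc hlr x
  obtain ⟨X, hXb, hX⟩ := exists_isIntegralCurveOn_of_bounded (L := L.toNNReal) hclamp_lip
    (fun x => (hL _ (clamp_mem_Icc hlr x)).trans (Real.le_coe_toNNReal L))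
    (right_mem_Icc.2 hab) x₀
  have hmem : ∀ t ∈ Icc a b, X t ∈ Icc l r :=
    mem_Icc_of_isIntegralCurveOn_comp_clamp hlr hFr hFl hX (hXb ▸ hx₀)
  refine ⟨X, hXb, fun t ht => ?_, hmem⟩
  simpa only [comp_apply, clamp_of_mem_Icc (hmem t ht)] using hX t ht

end TerminalValueProblem

section Grid

variable {N : ℕ} {μ : ℝ}

theorem finite_gridSN (N : ℕ) : (gridSN N).Finite :=
  ((finite_Iic N).image fun k : ℕ => (k : ℝ) / N).subset fun _ ⟨k, hk, hμ⟩ => ⟨k, hk, hμ.symm⟩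

noncomputable instance (N : ℕ) : Fintype (gridSN N) := (finite_gridSN N).fintype

/-- Extension by zero of a function on the grid to all of `ℝ`, the domain on which `HJBSol` takes
its unknown. -/
noncomputable def gridExtend (x : gridSN N → ℝ) : ℝ → ℝ := extend Subtype.val x 0

theorem gridExtend_apply (x : gridSN N → ℝ) (hμ : μ ∈ gridSN N) : gridExtend x μ = x ⟨μ, hμ⟩ :=
  Subtype.val_injective.extend_apply x 0 ⟨μ, hμ⟩

theorem lipschitzWith_gridExtend_apply (μ : ℝ) :
    LipschitzWith 1 fun x : gridSN N → ℝ => gridExtend x μ :=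
  lipschitzWith_extend_apply Subtype.val 0 μ

theorem gridSN_subset_Icc (N : ℕ) : gridSN N ⊆ Icc 0 1 := by
  rintro _ ⟨k, hk, rfl⟩
  exact ⟨by positivity, div_le_one_of_le₀ (by exact_mod_cast hk) (by positivity)⟩

theorem one_sub_mem_gridSN (hN : N ≠ 0) (hμ : μ ∈ gridSN N) : 1 - μ ∈ gridSN N := by
  obtain ⟨k, hk, rfl⟩ := hμ
  refine ⟨N - k, N.sub_le k, ?_⟩
  rw [Nat.cast_sub hk]
  field_simp

theorem add_one_div_mem_gridSN (hN : N ≠ 0) (hμ : μ ∈ gridSN N) (hμ1 : μ ≠ 1) :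
    μ + 1 / (N : ℝ) ∈ gridSN N := by
  obtain ⟨k, hk, rfl⟩ := hμ
  have hkN : k ≠ N := fun h => hμ1 (by rw [h, div_self (by exact_mod_cast hN)])
  exact ⟨k + 1, by omega, by push_cast; ring⟩

theorem sub_one_div_mem_gridSN (hN : N ≠ 0) (hμ : μ ∈ gridSN N) (hμ0 : μ ≠ 0) :
    μ - 1 / (N : ℝ) ∈ gridSN N := by
  have h := add_one_div_mem_gridSN hN (one_sub_mem_gridSN hN hμ) (by simpa using hμ0)
  convert one_sub_mem_gridSN hN h using 1
  ring

end Grid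

section HJB

variable {N : ℕ}

/-- The time derivative prescribed by `HJBSol` at the grid point `μ` when the value function is `v`.
The case distinctions of `HJBSol` are dropped, since the coefficients `N μ` and `N (1 - μ)` vanish
in the excluded cases. -/
noncomputable def hjbRhs (N : ℕ) (v : ℝ → ℝ) (μ : ℝ) : ℝ :=
  (v (1 - μ) - v μ)⁻ ^ 2 / 2
    - N * μ * (v (1 - μ) - v μ)⁻ * (v (μ - 1 / N) - v μ)
    - N * (1 - μ) * (v (μ + 1 / N) - v (1 - μ - 1 / N))⁻ * (v (μ + 1 / N) - v μ)

theorem hjbSol_iff_hasDerivWithinAt_hjbRhs {T : ℝ} {V : ℝ → ℝ → ℝ} :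
    HJBSol N T V ↔ ∀ μ ∈ gridSN N, ∀ t ∈ Icc 0 T,
      HasDerivWithinAt (V · μ) (hjbRhs N (V t) μ) (Icc 0 T) t := by
  refine forall₄_congr fun μ _ t _ => iff_of_eq (congrArg (HasDerivWithinAt _ · _ _) ?_)
  rcases eq_or_ne μ 0 with hμ0 | hμ0 <;> rcases eq_or_ne μ 1 with hμ1 | hμ1 <;>
    simp [hjbRhs, negPart_def, hμ0, hμ1]

theorem hjbRhs_congr (hN : N ≠ 0) {v w : ℝ → ℝ} (h : EqOn v w (gridSN N)) :
    EqOn (hjbRhs N v) (hjbRhs N w) (gridSN N) := by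
  intro μ hμ
  have h_down : N * μ * (v (1 - μ) - v μ)⁻ * (v (μ - 1 / N) - v μ)
      = N * μ * (w (1 - μ) - w μ)⁻ * (w (μ - 1 / N) - w μ) := by
    rcases eq_or_ne μ 0 with rfl | hμ0
    · simp
    · rw [h hμ, h (one_sub_mem_gridSN hN hμ), h (sub_one_div_mem_gridSN hN hμ hμ0)]
  have h_up : N * (1 - μ) * (v (μ + 1 / N) - v (1 - μ - 1 / N))⁻ * (v (μ + 1 / N) - v μ)
      = N * (1 - μ) * (w (μ + 1 / N) - w (1 - μ - 1 / N))⁻ * (w (μ + 1 / N) - w μ) := by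
    rcases eq_or_ne μ 1 with rfl | hμ1
    · simp
    · have hμN := add_one_div_mem_gridSN hN hμ hμ1
      rw [sub_sub, h hμ, h hμN, h (one_sub_mem_gridSN hN hμN)]
  rw [hjbRhs, hjbRhs, h_down, h_up, h hμ, h (one_sub_mem_gridSN hN hμ)]

theorem hjbRhs_nonneg_of_isMaxOn (hN : N ≠ 0) {v : ℝ → ℝ} {μ : ℝ} (hμ : μ ∈ gridSN N)
    (hv : IsMaxOn v (gridSN N) μ) : 0 ≤ hjbRhs N v μ := by
  obtain ⟨hμ_nonneg, hμ_le⟩ := gridSN_subset_Icc N hμ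
  have h_down : N * μ * (v (1 - μ) - v μ)⁻ * (v (μ - 1 / N) - v μ) ≤ 0 := by
    rcases eq_or_ne μ 0 with rfl | hμ0
    · simp
    · exact mul_nonpos_of_nonneg_of_nonpos (by positivity)
        (sub_nonpos.2 (hv (sub_one_div_mem_gridSN hN hμ hμ0)))
  have h_up : N * (1 - μ) * (v (μ + 1 / N) - v (1 - μ - 1 / N))⁻ * (v (μ + 1 / N) - v μ) ≤ 0 := by
    rcases eq_or_ne μ 1 with rfl | hμ1
    · simp
    · have := sub_nonneg.2 hμ_le
      exact mul_nonpos_of_nonneg_of_nonpos (by positivity)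
        (sub_nonpos.2 (hv (add_one_div_mem_gridSN hN hμ hμ1)))
  have h_sq : 0 ≤ (v (1 - μ) - v μ)⁻ ^ 2 / 2 := by positivity
  rw [hjbRhs]
  linarith

theorem hjbRhs_nonpos_of_isMinOn (hN : N ≠ 0) {v : ℝ → ℝ} {μ : ℝ} (hμ : μ ∈ gridSN N)
    (hv : IsMinOn v (gridSN N) μ) : hjbRhs N v μ ≤ 0 := by
  have h_control : (v (1 - μ) - v μ)⁻ = 0 :=
    negPart_eq_zero.2 (sub_nonneg.2 (hv (one_sub_mem_gridSN hN hμ)))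
  have h_up : 0 ≤ N * (1 - μ) * (v (μ + 1 / N) - v (1 - μ - 1 / N))⁻ * (v (μ + 1 / N) - v μ) := by
    rcases eq_or_ne μ 1 with rfl | hμ1
    · simp
    · have := sub_nonneg.2 (gridSN_subset_Icc N hμ).2
      exact mul_nonneg (by positivity) (sub_nonneg.2 (hv (add_one_div_mem_gridSN hN hμ hμ1)))
  rw [hjbRhs, h_control]
  linarith

/-- The vector field on `gridSN N → ℝ` whose integral curves are the solutions of the system. -/
noncomputable def hjbField (N : ℕ) (x : gridSN N → ℝ) : gridSN N → ℝ :=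
  (gridSN N).domRestrict (hjbRhs N (gridExtend x))

theorem hjbSol_iff_isIntegralCurveOn (hN : N ≠ 0) {T : ℝ} {V : ℝ → ℝ → ℝ} :
    HJBSol N T V ↔
      IsIntegralCurveOn (fun t => (gridSN N).domRestrict (V t)) (fun _ => hjbField N)
        (Icc 0 T) := by
  have h_field (t : ℝ) (μ : gridSN N) :
      hjbField N ((gridSN N).domRestrict (V t)) μ = hjbRhs N (V t) μ :=
    hjbRhs_congr hN (fun _ => gridExtend_apply _) μ.2
  simp only [hjbSol_iff_hasDerivWithinAt_hjbRhs, IsIntegralCurveOn, hasDerivWithinAt_pi, h_field,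
    Subtype.forall]
  exact ⟨fun h t ht μ hμ => h μ hμ t ht, fun h μ hμ t ht => h t ht μ hμ⟩

theorem locallyLipschitz_hjbField (N : ℕ) : LocallyLipschitz (hjbField N) := by
  refine locallyLipschitz_pi fun ⟨μ, _⟩ => ?_
  have hval (ν : ℝ) : LocallyLipschitz fun x : gridSN N → ℝ => gridExtend x ν :=
    (lipschitzWith_gridExtend_apply ν).locallyLipschitz
  have hdiff (ν ξ : ℝ) : LocallyLipschitz fun x : gridSN N → ℝ =>
      gridExtend x ν - gridExtend x ξ := (hval ν).sub (hval ξ)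
  have hcontrol (ν ξ : ℝ) := locallyLipschitz_negPart (hdiff ν ξ)
  have hsq : LocallyLipschitz fun p : ℝ => p ^ 2 / 2 :=
    ((contDiff_id (𝕜 := ℝ) (n := 1)).pow 2 |>.div_const 2).locallyLipschitz
  exact ((hsq.comp (hcontrol _ _)).sub
    (locallyLipschitz_mul (locallyLipschitz_mul (.const (N * μ)) (hcontrol _ _)) (hdiff _ _))).sub
    (locallyLipschitz_mul (locallyLipschitz_mul (.const (N * (1 - μ))) (hcontrol _ _)) (hdiff _ _))

theorem hjbField_nonneg_of_isMax (hN : N ≠ 0) {x : gridSN N → ℝ} {μ : gridSN N}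
    (hx : ∀ ν, x ν ≤ x μ) : 0 ≤ hjbField N x μ := by
  refine hjbRhs_nonneg_of_isMaxOn hN μ.2 (isMaxOn_iff.2 fun ν hν => ?_)
  simpa only [gridExtend_apply _ hν, gridExtend_apply _ μ.2] using hx ⟨ν, hν⟩

theorem hjbField_nonpos_of_isMin (hN : N ≠ 0) {x : gridSN N → ℝ} {μ : gridSN N}
    (hx : ∀ ν, x μ ≤ x ν) : hjbField N x μ ≤ 0 := by
  refine hjbRhs_nonpos_of_isMinOn hN μ.2 (isMinOn_iff.2 fun ν hν => ?_)
  simpa only [gridExtend_apply _ hν, gridExtend_apply _ μ.2] using hx ⟨ν, hν⟩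

end HJB

theorem stmt_12_general {N : ℕ} (hN : N ≠ 0) {T : ℝ} (hT : 0 ≤ T) {a b : ℝ} {g : ℝ → ℝ}
    (hg : MapsTo g (gridSN N) (Icc a b)) :
    ∃ V : ℝ → ℝ → ℝ,
      HJBSol N T V ∧ EqOn (V T) g (gridSN N) ∧
      (∀ t ∈ Icc 0 T, MapsTo (V t) (gridSN N) (Icc a b)) ∧
      (∀ W : ℝ → ℝ → ℝ, HJBSol N T W → EqOn (W T) g (gridSN N) →
        ∀ t ∈ Icc 0 T, EqOn (W t) (V t) (gridSN N)) := by
  obtain ⟨X, hXT, hX, hXab⟩ := exists_isIntegralCurveOn_mem_Icc (l := fun _ => a) (r := fun _ => b)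
    (x₀ := (gridSN N).domRestrict g) hT (locallyLipschitz_hjbField N).locallyLipschitzOn
    (fun x hx μ hμ => hjbField_nonneg_of_isMax hN fun ν => hμ ▸ hx.2 ν)
    (fun x hx μ hμ => hjbField_nonpos_of_isMin hN fun ν => hμ ▸ hx.1 ν)
    ⟨fun μ => (hg μ.2).1, fun μ => (hg μ.2).2⟩
  have hX_restrict (t : ℝ) : (gridSN N).domRestrict (gridExtend (X t)) = X t :=
    funext fun μ => gridExtend_apply (X t) μ.2
  refine ⟨fun t => gridExtend (X t), ?_, fun μ hμ => ?_, fun t ht μ hμ => ?_,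
    fun W hW hWT t ht μ hμ => ?_⟩
  · simpa only [hjbSol_iff_isIntegralCurveOn hN, hX_restrict] using hX
  · exact (gridExtend_apply _ hμ).trans (congrFun hXT ⟨μ, hμ⟩)
  · change gridExtend (X t) μ ∈ Icc a b
    rw [gridExtend_apply _ hμ]
    exact ⟨(hXab t ht).1 _, (hXab t ht).2 _⟩
  · have hWX : EqOn (fun t => (gridSN N).domRestrict (W t)) X (Icc 0 T) :=
      eqOn_of_isIntegralCurveOn_of_terminal_eq (locallyLipschitz_hjbField N)
        ((hjbSol_iff_isIntegralCurveOn hN).1 hW) hX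
        ((domRestrict_eq_domRestrict_iff.2 hWT).trans hXT.symm)
    exact (congrFun (hWX ht) ⟨μ, hμ⟩).trans (gridExtend_apply _ hμ).symm

/-- There is a unique solution of the HJB ODE system on `[0,T] × S_N` with
terminal condition `V(T,μ) = −(2μ−1)`, and it satisfies `|V(t,μ)| ≤ 1`. -/
theorem stmt_12 (N : ℕ) (hN : 1 ≤ N) (T : ℝ) (hT : 0 < T) :
    ∃ V : ℝ → ℝ → ℝ,
      HJBSol N T V ∧ (∀ μ ∈ gridSN N, V T μ = -(2*μ - 1)) ∧
      (∀ t ∈ Set.Icc (0:ℝ) T, ∀ μ ∈ gridSN N, |V t μ| ≤ 1) ∧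
      (∀ W : ℝ → ℝ → ℝ, HJBSol N T W → (∀ μ ∈ gridSN N, W T μ = -(2*μ - 1)) →
        ∀ t ∈ Set.Icc (0:ℝ) T, ∀ μ ∈ gridSN N, W t μ = V t μ) := by
  obtain ⟨V, hV, hVT, hV_mem, hV_unique⟩ :=
    stmt_12_general (N := N) (a := -1) (b := 1) (g := fun μ => -(2 * μ - 1)) (by omega) hT.le
      fun μ hμ => by
        obtain ⟨h0, h1⟩ := gridSN_subset_Icc N hμ
        constructor <;> linarith
  exact ⟨V, hV, hVT, fun t ht μ hμ => abs_le.2 (hV_mem t ht hμ), hV_unique⟩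
end
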